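/- arXiv:math/0308229 — 2 statements merged into one kernel-verified Lean document; each statement's English description precedes it below -/
import Mathlib

section
/- The maps z, z†, E, F, K̂, K̂⁻¹ form a ∗-representation of the cross product ∗-algebra U_q(su_{1,1})⋉O(U_q) on D: ⟨zξ, η⟩ = ⟨ξ, z†η⟩, ⟨Eξ, η⟩ = −⟨ξ, Fη⟩, ⟨K̂ξ, η⟩ = ⟨ξ, K̂η⟩ for all ξ, η ∈ D, and on D the relations hold: z†z − q²zz† = (1−q²)·id; K̂K̂⁻¹ = K̂⁻¹K̂ = id; K̂E = qEK̂; K̂F = q⁻¹FK̂; EF − FE = λ⁻¹(K̂² − K̂⁻²); zK̂ = q⁻¹K̂z; zE = q⁻¹Ez − q^{1/2}K̂⁻¹z²; zF = q⁻¹Fz + q^{−1/2}K̂⁻¹; z†K̂ = qK̂z†; z†E = qEz† + q^{1/2}K̂⁻¹; z†F = qFz† − q^{−1/2}K̂⁻¹(z†)². -/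
noncomputable section

/-- The inner product `⟨η, ζ⟩ = Σᵢ ⟨η(i), ζ(i)⟩` on the space of finitely supported
functions `ι →₀ H` with values in a complex inner product space `H`. -/
def finsuppInner {ι H : Type*} [NormedAddCommGroup H] [InnerProductSpace ℂ H]
    (η ζ : ι →₀ H) : ℂ :=
  η.sum fun i x => (inner ℂ x (ζ i) : ℂ)

namespace Stmt16

variable {K : Type*} [NormedAddCommGroup K] [InnerProductSpace ℂ K] [CompleteSpace K]

/-- `z η_n = η_{n+1}`. -/
def zOp : Module.End ℂ (ℤ →₀ K) :=
  Finsupp.lsum ℂ fun n => Finsupp.lsingle (n + 1)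

/-- `z† η_n = η_{n-1}`. -/
def zdOp : Module.End ℂ (ℤ →₀ K) :=
  Finsupp.lsum ℂ fun n => Finsupp.lsingle (n - 1)

/-- `K̂ η_n = qⁿ ε H η_n`. -/
def KOp (q ε : ℝ) (H : K →L[ℂ] K) : Module.End ℂ (ℤ →₀ K) :=
  Finsupp.lsum ℂ fun n => (Finsupp.lsingle n).comp
    (((q : ℂ) ^ n * (ε : ℂ)) • (H : K →ₗ[ℂ] K))

/-- `K̂⁻¹ η_n = q⁻ⁿ ε H⁻¹ η_n`. -/
def KinvOp (q ε : ℝ) (H : K →L[ℂ] K) [Invertible H] : Module.End ℂ (ℤ →₀ K) :=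
  Finsupp.lsum ℂ fun n => (Finsupp.lsingle n).comp
    (((q : ℂ) ^ (-n) * (ε : ℂ)) • ((⅟H : K →L[ℂ] K) : K →ₗ[ℂ] K))

/-- `F η_n = λ⁻¹q^{n-1/2} ε H v η_{n-1} + λ⁻¹q^{-n+1/2} ε H⁻¹ η_{n-1}`,
where `λ = q - q⁻¹` and `q^{n-1/2} = (√q)^{2n-1}`. -/
def FOp (q ε : ℝ) (H v : K →L[ℂ] K) [Invertible H] : Module.End ℂ (ℤ →₀ K) :=
  Finsupp.lsum ℂ fun n =>
    (Finsupp.lsingle (n - 1)).comp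
      ((((q : ℂ) - (q : ℂ)⁻¹)⁻¹ * (Real.sqrt q : ℂ) ^ (2 * n - 1) * (ε : ℂ)) •
        ((H * v : K →L[ℂ] K) : K →ₗ[ℂ] K))
    + (Finsupp.lsingle (n - 1)).comp
      ((((q : ℂ) - (q : ℂ)⁻¹)⁻¹ * (Real.sqrt q : ℂ) ^ (1 - 2 * n) * (ε : ℂ)) •
        ((⅟H : K →L[ℂ] K) : K →ₗ[ℂ] K))

/-- `E η_n = -λ⁻¹q^{n+1/2} ε H v* η_{n+1} - λ⁻¹q^{-n-1/2} ε H⁻¹ η_{n+1}`. -/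
def EOp (q ε : ℝ) (H v : K →L[ℂ] K) [Invertible H] : Module.End ℂ (ℤ →₀ K) :=
  Finsupp.lsum ℂ fun n =>
    -((Finsupp.lsingle (n + 1)).comp
      ((((q : ℂ) - (q : ℂ)⁻¹)⁻¹ * (Real.sqrt q : ℂ) ^ (2 * n + 1) * (ε : ℂ)) •
        ((H * star v : K →L[ℂ] K) : K →ₗ[ℂ] K)))
    - (Finsupp.lsingle (n + 1)).comp
      ((((q : ℂ) - (q : ℂ)⁻¹)⁻¹ * (Real.sqrt q : ℂ) ^ (-(2 * n + 1)) * (ε : ℂ)) •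
        ((⅟H : K →L[ℂ] K) : K →ₗ[ℂ] K))

end Stmt16

/-! The operators are words in three invertible operators: the shift `z`, the weight operator `K̂`
and the pointwise action `V` of `v`. Here `V` commutes with `z` and `K̂`, while `K̂ z = q z K̂`. Put
`W(t, u) = t K̂ u + t⁻¹ K̂⁻¹`. Then `E = -λ⁻¹ z W(q^{1/2}, V⁻¹)`, `F = λ⁻¹ z⁻¹ W(q^{-1/2}, V)`, and
moving `z` through `W` only rescales `t`: `W(t, u) z = z W(q t, u)`. With this rule the relations
hold in any algebra; for the commutator one uses that
`W(t, u) W(t, u⁻¹) = t² K̂² + t⁻² K̂⁻² + u + u⁻¹`. The substitution `(q, z, u) ↦ (q⁻¹, z⁻¹, u⁻¹)`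
exchanges `E` and `F`, so only the relations for `E` are computed. -/

namespace Stmt16

section QCommute

variable {𝕜 A : Type*} [Field 𝕜] [Semiring A] [Algebra 𝕜 A] {c : 𝕜}

/-- `a` and `b` commute up to the scalar `c`: `a b = c b a`. -/
def QCommute (c : 𝕜) (a b : A) : Prop :=
  a * b = c • (b * a)

namespace QCommute

theorem eq_smul {a b : A} (h : QCommute c a b) : a * b = c • (b * a) :=
  h

theorem symm {a b : A} (hc : c ≠ 0) (h : QCommute c a b) : QCommute c⁻¹ b a :=
  (eq_inv_smul_iff₀ hc).2 (Eq.symm h)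

theorem units_inv_left {a : Aˣ} {b : A} (hc : c ≠ 0) (h : QCommute c (a : A) b) :
    QCommute c⁻¹ (↑a⁻¹ : A) b := by
  rw [QCommute, Units.inv_mul_eq_iff_eq_mul, mul_smul_comm, ← mul_assoc, h.eq_smul,
    smul_mul_assoc, inv_smul_smul₀ hc, Units.mul_inv_cancel_right]

theorem units_inv_right {a : A} {b : Aˣ} (hc : c ≠ 0) (h : QCommute c a (b : A)) :
    QCommute c⁻¹ a (↑b⁻¹ : A) := by
  simpa only [inv_inv] using ((h.symm hc).units_inv_left (inv_ne_zero hc)).symm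
    (inv_ne_zero (inv_ne_zero hc))

theorem mul_right_of_commute {a b d : A} (h : QCommute c a b) (had : Commute a d) :
    QCommute c a (b * d) := by
  rw [QCommute, ← mul_assoc, h.eq_smul, smul_mul_assoc, mul_assoc, had.eq, mul_assoc]

theorem smul_right {a b : A} (h : QCommute c a b) (r : 𝕜) : QCommute c a (r • b) := by
  rw [QCommute, mul_smul_comm, h.eq_smul, smul_mul_assoc, smul_comm]

end QCommute

end QCommute

section Relations

variable {𝕜 A : Type*} [Field 𝕜] [Ring A] [Algebra 𝕜 A]

/-- The defining relations of `U_q(su_{1,1}) ⋉ O(U_q)`, for elements `z, z̄, E, F, K, K⁻¹` of an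
algebra; `s` stands for `q^{1/2}`. -/
structure CrossProductRelations (q s : 𝕜) (z zd E F K Kinv : A) : Prop where
  zd_mul_z : zd * z - q ^ 2 • (z * zd) = (1 - q ^ 2) • 1
  K_mul_Kinv : K * Kinv = 1
  Kinv_mul_K : Kinv * K = 1
  K_mul_E : K * E = q • (E * K)
  K_mul_F : K * F = q⁻¹ • (F * K)
  E_mul_F : E * F - F * E = (q - q⁻¹)⁻¹ • (K * K - Kinv * Kinv)
  z_mul_K : z * K = q⁻¹ • (K * z)
  z_mul_E : z * E = q⁻¹ • (E * z) - s • (Kinv * (z * z))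
  z_mul_F : z * F = q⁻¹ • (F * z) + s⁻¹ • Kinv
  zd_mul_K : zd * K = q • (K * zd)
  zd_mul_E : zd * E = q • (E * zd) + s • Kinv
  zd_mul_F : zd * F = q • (F * zd) - s⁻¹ • (Kinv * (zd * zd))

/-- The element `W(t, u) = t k u + t⁻¹ k⁻¹`, the common factor of the generators `E` and `F`. -/
def toral (t : 𝕜) (k u : Aˣ) : A :=
  t • (k * u : A) + t⁻¹ • (↑k⁻¹ : A)

/-- The generator `E = -λ⁻¹ z W(s, u⁻¹)`, where `λ = q - q⁻¹` and `s` stands for `q^{1/2}`. -/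
def raising (q s : 𝕜) (z k u : Aˣ) : A :=
  -(q - q⁻¹)⁻¹ • (z * toral s k u⁻¹)

/-- The generator `F = λ⁻¹ z⁻¹ W(s⁻¹, u)`, encoded as the image of `raising` under the
symmetry inverting `q`, `s`, `z` and `u`; see `lowering_eq`. -/
def lowering (q s : 𝕜) (z k u : Aˣ) : A :=
  raising q⁻¹ s⁻¹ z⁻¹ k u⁻¹

variable {q s t : 𝕜} {z k u : Aˣ}

theorem lowering_eq : lowering q s z k u = (q - q⁻¹)⁻¹ • (↑z⁻¹ * toral s⁻¹ k u : A) := by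
  rw [lowering, raising, inv_inv q, inv_inv u, ← inv_neg, neg_sub]

theorem toral_mul (hq : q ≠ 0) (hkz : QCommute q (k : A) z) (huz : Commute u z) :
    toral t k u * z = z * toral (q * t) k u := by
  have hkuz : (k * u * z : A) = q • (z * (k * u) : A) := by
    rw [mul_assoc, huz.units_val.eq, ← mul_assoc, hkz.eq_smul, smul_mul_assoc, mul_assoc]
  rw [toral, toral, add_mul, smul_mul_assoc, smul_mul_assoc, hkuz,
    (hkz.units_inv_left hq).eq_smul, mul_add, mul_smul_comm, mul_smul_comm, smul_smul, smul_smul,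
    mul_comm t, mul_inv_rev]

theorem mul_toral (hq : q ≠ 0) (hkz : QCommute q (k : A) z) (huz : Commute u z) :
    z * toral t k u = toral (q⁻¹ * t) k u * z := by
  rw [toral_mul hq hkz huz, mul_inv_cancel_left₀ hq]

theorem toral_mul_sub_smul_toral (a : 𝕜) :
    toral (a * t) k u - a • toral t k u = ((a⁻¹ - a) * t⁻¹) • (↑k⁻¹ : A) := by
  simp only [toral, mul_inv]
  module

theorem commute_toral (hku : Commute k u) : Commute (k : A) (toral t k u) :=
  .add_right (((Commute.refl _).mul_right hku.units_val).smul_right _)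
    ((Commute.refl k).inv_right.units_val.smul_right _)

theorem toral_mul_toral_inv (ht : t ≠ 0) (hku : Commute k u) :
    toral t k u * toral t k u⁻¹ =
      t ^ 2 • (k * k : A) + (t ^ 2)⁻¹ • (↑k⁻¹ * ↑k⁻¹ : A) + (u + ↑u⁻¹ : A) := by
  have hkk : (k * u * (k * ↑u⁻¹) : A) = k * k := by
    rw [mul_assoc, ← mul_assoc (u : A), ← hku.units_val.eq, Units.mul_inv_cancel_right]
  have hu : (k * u * ↑k⁻¹ : A) = u := by
    rw [hku.units_val.eq, Units.mul_inv_cancel_right]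
  have hu_inv : (↑k⁻¹ * (k * ↑u⁻¹) : A) = ↑u⁻¹ := Units.inv_mul_cancel_left _ _
  simp only [toral, add_mul, mul_add, smul_mul_smul_comm, hkk, hu, hu_inv, mul_inv_cancel₀ ht,
    inv_mul_cancel₀ ht, one_smul, sq, mul_inv]
  abel

theorem qCommute_raising (hkz : QCommute q (k : A) z) (hku : Commute k u) :
    QCommute q (k : A) (raising q s z k u) :=
  (hkz.mul_right_of_commute (commute_toral hku.inv_right)).smul_right _

theorem mul_inv_eq_of_sq_eq (hs : s ^ 2 = q) : q * s⁻¹ = s := by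
  rw [← hs, sq, mul_self_mul_inv]

theorem raising_eq_toral_mul (hs : s ^ 2 = q) (hq : q ≠ 0) (hkz : QCommute q (k : A) z)
    (huz : Commute u z) :
    raising q s z k u = -(q - q⁻¹)⁻¹ • (toral s⁻¹ k u⁻¹ * z : A) := by
  rw [raising, toral_mul hq hkz huz.inv_left, mul_inv_eq_of_sq_eq hs]

theorem mul_raising (hs : s ^ 2 = q) (hq : q ≠ 0) (hlam : q - q⁻¹ ≠ 0)
    (hkz : QCommute q (k : A) z) (huz : Commute u z) :
    z * raising q s z k u = q⁻¹ • (raising q s z k u * z) - s • (↑k⁻¹ * (z * z) : A) := by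
  have htoral : toral (q⁻¹ * s⁻¹) k u⁻¹ - q⁻¹ • toral s⁻¹ k u⁻¹ =
      ((q - q⁻¹) * s) • (↑k⁻¹ : A) := by
    rw [toral_mul_sub_smul_toral, inv_inv, inv_inv]
  rw [sub_eq_add_neg, ← sub_eq_iff_eq_add', raising_eq_toral_mul hs hq hkz huz]
  calc (z * (-(q - q⁻¹)⁻¹ • (toral s⁻¹ k u⁻¹ * z))
        - q⁻¹ • (-(q - q⁻¹)⁻¹ • (toral s⁻¹ k u⁻¹ * z) * z) : A)
      = -(q - q⁻¹)⁻¹ • ((toral (q⁻¹ * s⁻¹) k u⁻¹ - q⁻¹ • toral s⁻¹ k u⁻¹) * (z * z)) := by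
        rw [mul_smul_comm, ← mul_assoc, mul_toral hq hkz huz.inv_left, smul_mul_assoc, mul_assoc,
          mul_assoc, sub_mul, smul_mul_assoc, smul_sub, smul_comm q⁻¹]
    _ = -(s • (↑k⁻¹ * (z * z) : A)) := by
        rw [htoral, smul_mul_assoc, smul_smul, neg_mul, inv_mul_cancel_left₀ hlam, neg_smul]

theorem inv_mul_raising (hs : s ^ 2 = q) (hq : q ≠ 0) (hlam : q - q⁻¹ ≠ 0)
    (hkz : QCommute q (k : A) z) (huz : Commute u z) :
    ↑z⁻¹ * raising q s z k u = q • (raising q s z k u * ↑z⁻¹) + s • (↑k⁻¹ : A) := by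
  have htoral : toral s k u⁻¹ - q • toral s⁻¹ k u⁻¹ = (-(q - q⁻¹) * s) • (↑k⁻¹ : A) := by
    have h := toral_mul_sub_smul_toral (t := s⁻¹) (k := k) (u := u⁻¹) q
    rwa [mul_inv_eq_of_sq_eq hs, inv_inv, ← neg_sub q q⁻¹] at h
  have hleft : ↑z⁻¹ * raising q s z k u = -(q - q⁻¹)⁻¹ • toral s k u⁻¹ := by
    rw [raising, mul_smul_comm, Units.inv_mul_cancel_left]
  have hright : raising q s z k u * ↑z⁻¹ = -(q - q⁻¹)⁻¹ • toral s⁻¹ k u⁻¹ := by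
    rw [raising_eq_toral_mul hs hq hkz huz, smul_mul_assoc, Units.mul_inv_cancel_right]
  rw [← sub_eq_iff_eq_add', hleft, hright, smul_comm q, ← smul_sub, htoral, smul_smul,
    ← mul_assoc, neg_mul_neg, inv_mul_cancel₀ hlam, one_mul]

theorem raising_mul_lowering (hs : s ^ 2 = q) (hq : q ≠ 0) (hkz : QCommute q (k : A) z)
    (huz : Commute u z) :
    raising q s z k u * lowering q s z k u =
      (-(q - q⁻¹)⁻¹ * (q - q⁻¹)⁻¹) • (toral s⁻¹ k u⁻¹ * toral s⁻¹ k u : A) := by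
  rw [raising_eq_toral_mul hs hq hkz huz, lowering_eq, smul_mul_smul_comm, mul_assoc,
    Units.mul_inv_cancel_left]

theorem lowering_mul_raising (hs : s ^ 2 = q) (hq : q ≠ 0) (hkz : QCommute q (k : A) z)
    (huz : Commute u z) :
    lowering q s z k u * raising q s z k u =
      (-(q - q⁻¹)⁻¹ * (q - q⁻¹)⁻¹) • (toral s k u * toral s k u⁻¹ : A) := by
  rw [lowering_eq, raising, smul_mul_smul_comm, mul_assoc, ← mul_assoc _ (z : A),
    toral_mul hq hkz huz, mul_inv_eq_of_sq_eq hs, mul_assoc, Units.inv_mul_cancel_left,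
    mul_comm (q - q⁻¹)⁻¹]

theorem raising_mul_lowering_sub (hs : s ^ 2 = q) (hq : q ≠ 0) (hlam : q - q⁻¹ ≠ 0)
    (hkz : QCommute q (k : A) z) (huz : Commute u z) (hku : Commute k u) :
    raising q s z k u * lowering q s z k u - lowering q s z k u * raising q s z k u
      = (q - q⁻¹)⁻¹ • (k * k - ↑k⁻¹ * ↑k⁻¹ : A) := by
  have hs0 : s ≠ 0 := by rintro rfl; exact hq (by rw [← hs, zero_pow two_ne_zero])
  have htoral : (toral s⁻¹ k u⁻¹ * toral s⁻¹ k u : A) =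
      q⁻¹ • (k * k : A) + q • (↑k⁻¹ * ↑k⁻¹ : A) + (↑u⁻¹ + u : A) := by
    simpa only [inv_inv, inv_pow, hs] using
      toral_mul_toral_inv (inv_ne_zero hs0) hku.inv_right
  calc raising q s z k u * lowering q s z k u - lowering q s z k u * raising q s z k u
      = (-(q - q⁻¹)⁻¹ * (q - q⁻¹)⁻¹) •
          (toral s⁻¹ k u⁻¹ * toral s⁻¹ k u - toral s k u * toral s k u⁻¹ : A) := by
        rw [raising_mul_lowering hs hq hkz huz, lowering_mul_raising hs hq hkz huz, smul_sub]
    _ = (-(q - q⁻¹)⁻¹ * (q - q⁻¹)⁻¹) • (-(q - q⁻¹) • (k * k - ↑k⁻¹ * ↑k⁻¹ : A)) := by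
        rw [htoral, toral_mul_toral_inv hs0 hku, hs]
        module
    _ = (q - q⁻¹)⁻¹ • (k * k - ↑k⁻¹ * ↑k⁻¹ : A) := by
        rw [smul_smul, neg_mul, neg_mul_neg, inv_mul_cancel_right₀ hlam]

theorem crossProductRelations_raising_lowering (hs : s ^ 2 = q) (hq : q ≠ 0)
    (hlam : q - q⁻¹ ≠ 0) (hkz : QCommute q (k : A) z) (huz : Commute u z) (hku : Commute k u) :
    CrossProductRelations q s (z : A) (↑z⁻¹) (raising q s z k u) (lowering q s z k u) k (↑k⁻¹) := by
  have hkz_inv : QCommute q⁻¹ (k : A) ↑z⁻¹ := hkz.units_inv_right hq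
  have hs_inv : s⁻¹ ^ 2 = q⁻¹ := by rw [inv_pow, hs]
  have hlam_inv : q⁻¹ - q⁻¹⁻¹ ≠ 0 := by rwa [inv_inv, sub_ne_zero, ne_comm, ← sub_ne_zero]
  exact
  { zd_mul_z := by rw [Units.inv_mul, Units.mul_inv, sub_smul, one_smul]
    K_mul_Kinv := k.mul_inv
    Kinv_mul_K := k.inv_mul
    K_mul_E := qCommute_raising hkz hku
    K_mul_F := qCommute_raising hkz_inv hku.inv_right
    E_mul_F := raising_mul_lowering_sub hs hq hlam hkz huz hku
    z_mul_K := hkz.symm hq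
    z_mul_E := mul_raising hs hq hlam hkz huz
    z_mul_F := inv_mul_raising hs_inv (inv_ne_zero hq) hlam_inv hkz_inv huz.inv_inv
    zd_mul_K := by simpa only [inv_inv] using (hkz_inv.symm (inv_ne_zero hq)).eq_smul
    zd_mul_E := inv_mul_raising hs hq hlam hkz huz
    zd_mul_F := by
      simpa only [lowering, inv_inv] using
        mul_raising hs_inv (inv_ne_zero hq) hlam_inv hkz_inv huz.inv_inv }

end Relations

section FormalAdjoint

variable {ι M : Type*} [NormedAddCommGroup M] [InnerProductSpace ℂ M]

theorem finsuppInner_add_left (ξ₁ ξ₂ η : ι →₀ M) :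
    finsuppInner (ξ₁ + ξ₂) η = finsuppInner ξ₁ η + finsuppInner ξ₂ η := by
  classical
  exact Finsupp.sum_add_index' (fun _ => inner_zero_left _) fun _ _ _ => inner_add_left _ _ _

theorem finsuppInner_add_right (ξ η₁ η₂ : ι →₀ M) :
    finsuppInner ξ (η₁ + η₂) = finsuppInner ξ η₁ + finsuppInner ξ η₂ := by
  simp only [finsuppInner, Finsupp.add_apply, inner_add_right, Finsupp.sum_add]

theorem finsuppInner_smul_left (c : ℂ) (ξ η : ι →₀ M) :
    finsuppInner (c • ξ) η = starRingEnd ℂ c * finsuppInner ξ η := by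
  have hsum : finsuppInner (c • ξ) η = ξ.sum fun i x => inner ℂ (c • x) (η i) :=
    Finsupp.sum_smul_index' fun _ => inner_zero_left _
  rw [hsum, finsuppInner, Finsupp.sum, Finsupp.sum, Finset.mul_sum]
  simp only [inner_smul_left]

theorem finsuppInner_smul_right (c : ℂ) (ξ η : ι →₀ M) :
    finsuppInner ξ (c • η) = c * finsuppInner ξ η := by
  simp only [finsuppInner, Finsupp.smul_apply, inner_smul_right, Finsupp.sum,
    Finset.mul_sum]

theorem finsuppInner_neg_right (ξ η : ι →₀ M) : finsuppInner ξ (-η) = -finsuppInner ξ η := by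
  rw [← neg_one_smul ℂ, finsuppInner_smul_right, neg_one_mul]

theorem finsuppInner_single_single [DecidableEq ι] (i j : ι) (x y : M) :
    finsuppInner (Finsupp.single i x) (Finsupp.single j y) = if j = i then inner ℂ x y else 0 := by
  rw [finsuppInner, Finsupp.sum_single_index (by exact inner_zero_left _), Finsupp.single_apply]
  split_ifs
  · rfl
  · exact inner_zero_right x

/-- `T` is a formal adjoint of `S` on the inner product space of finitely supported functions:
`⟨S ξ, η⟩ = ⟨ξ, T η⟩`. -/
def IsFormalAdjoint (S T : Module.End ℂ (ι →₀ M)) : Prop :=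
  ∀ ξ η, finsuppInner (S ξ) η = finsuppInner ξ (T η)

namespace IsFormalAdjoint

variable {S T S' T' : Module.End ℂ (ι →₀ M)}

theorem of_single
    (h : ∀ i j x y, finsuppInner (S (Finsupp.single i x)) (Finsupp.single j y)
      = finsuppInner (Finsupp.single i x) (T (Finsupp.single j y))) :
    IsFormalAdjoint S T := fun ξ η => by
  induction ξ using Finsupp.induction_linear with
  | zero => simp [finsuppInner]
  | add ξ₁ ξ₂ h₁ h₂ => rw [map_add, finsuppInner_add_left, finsuppInner_add_left, h₁, h₂]
  | single i x =>
    induction η using Finsupp.induction_linear with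
    | zero => simp [finsuppInner]
    | add η₁ η₂ h₁ h₂ => rw [map_add, finsuppInner_add_right, finsuppInner_add_right, h₁, h₂]
    | single j y => exact h i j x y

theorem add (h : IsFormalAdjoint S T) (h' : IsFormalAdjoint S' T') :
    IsFormalAdjoint (S + S') (T + T') := fun ξ η => by
  rw [LinearMap.add_apply, LinearMap.add_apply, finsuppInner_add_left, finsuppInner_add_right,
    h, h']

theorem mul (h : IsFormalAdjoint S T) (h' : IsFormalAdjoint S' T') :
    IsFormalAdjoint (S * S') (T' * T) := fun ξ η =>
  (h (S' ξ) η).trans (h' ξ (T η))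

theorem ofReal_smul (h : IsFormalAdjoint S T) (c : ℝ) :
    IsFormalAdjoint ((c : ℂ) • S) ((c : ℂ) • T) := fun ξ η => by
  rw [LinearMap.smul_apply, LinearMap.smul_apply, finsuppInner_smul_left,
    finsuppInner_smul_right, Complex.conj_ofReal, h]

theorem units_inv {U V : (Module.End ℂ (ι →₀ M))ˣ}
    (h : IsFormalAdjoint (U : Module.End ℂ (ι →₀ M)) V) :
    IsFormalAdjoint (↑U⁻¹ : Module.End ℂ (ι →₀ M)) ↑V⁻¹ := fun ξ η => by
  have hU : (U : Module.End ℂ (ι →₀ M)) ((↑U⁻¹ : Module.End ℂ (ι →₀ M)) ξ) = ξ :=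
    LinearMap.congr_fun U.mul_inv ξ
  have hV : (V : Module.End ℂ (ι →₀ M)) ((↑V⁻¹ : Module.End ℂ (ι →₀ M)) η) = η :=
    LinearMap.congr_fun V.mul_inv η
  conv_lhs => rw [← hV]
  rw [← h, hU]

end IsFormalAdjoint

theorem isFormalAdjoint_toral {k u : (Module.End ℂ (ι →₀ M))ˣ}
    (hk : IsFormalAdjoint (k : Module.End ℂ (ι →₀ M)) k)
    (hu : IsFormalAdjoint (u : Module.End ℂ (ι →₀ M)) ↑u⁻¹) (hku : Commute k u) (t : ℝ) :
    IsFormalAdjoint (toral (t : ℂ) k u) (toral (t : ℂ) k u⁻¹) := by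
  have h := ((hk.mul hu).ofReal_smul t).add (hk.units_inv.ofReal_smul t⁻¹)
  rwa [← hku.inv_right.units_val.eq, Complex.ofReal_inv] at h

theorem isFormalAdjoint_raising {q s : ℝ} {z k u : (Module.End ℂ (ι →₀ M))ˣ}
    (hs : s ^ 2 = q) (hq : q ≠ 0)
    (hkz : QCommute (q : ℂ) (k : Module.End ℂ (ι →₀ M)) z) (huz : Commute u z)
    (hku : Commute k u)
    (hz : IsFormalAdjoint (z : Module.End ℂ (ι →₀ M)) ↑z⁻¹)
    (hk : IsFormalAdjoint (k : Module.End ℂ (ι →₀ M)) k)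
    (hu : IsFormalAdjoint (u : Module.End ℂ (ι →₀ M)) ↑u⁻¹) :
    IsFormalAdjoint (raising (q : ℂ) s z k u) (-lowering (q : ℂ) s z k u) := by
  have hu_inv : IsFormalAdjoint (↑u⁻¹ : Module.End ℂ (ι →₀ M)) ↑u⁻¹⁻¹ := hu.units_inv
  have h := ((isFormalAdjoint_toral hk hu_inv hku.inv_right s⁻¹).mul hz).ofReal_smul
    (-(q - q⁻¹)⁻¹)
  rw [raising_eq_toral_mul (mod_cast hs) (mod_cast hq) hkz huz, lowering_eq, ← neg_smul]
  simpa only [inv_inv, Complex.ofReal_neg, Complex.ofReal_inv, Complex.ofReal_sub] using h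

end FormalAdjoint

section Operators

variable {K : Type*} [NormedAddCommGroup K] [InnerProductSpace ℂ K]

/-- The action of an operator on the values of finitely supported functions. -/
def pointwise {ι : Type*} : (K →L[ℂ] K) →* Module.End ℂ (ι →₀ K) where
  toFun T := Finsupp.mapRange.linearMap (T : K →ₗ[ℂ] K)
  map_one' := Finsupp.mapRange.linearMap_id
  map_mul' S T := Finsupp.mapRange.linearMap_comp (S : K →ₗ[ℂ] K) (T : K →ₗ[ℂ] K)

theorem pointwise_single {ι : Type*} (T : K →L[ℂ] K) (i : ι) (x : K) :
    pointwise T (Finsupp.single i x) = Finsupp.single i (T x) :=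
  Finsupp.mapRange_single (hf := map_zero T)

theorem zOp_single (n : ℤ) (x : K) :
    zOp (Finsupp.single n x) = Finsupp.single (n + 1) x := by
  simp [zOp]

theorem zdOp_single (n : ℤ) (x : K) :
    zdOp (Finsupp.single n x) = Finsupp.single (n - 1) x := by
  simp [zdOp]

theorem KOp_single (q ε : ℝ) (H : K →L[ℂ] K) (n : ℤ) (x : K) :
    KOp q ε H (Finsupp.single n x) = ((q : ℂ) ^ n * ε) • Finsupp.single n (H x) := by
  simp [KOp]

theorem KinvOp_single (q ε : ℝ) (H : K →L[ℂ] K) [Invertible H] (n : ℤ) (x : K) :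
    KinvOp q ε H (Finsupp.single n x) = (((q : ℂ) ^ n)⁻¹ * ε) • Finsupp.single n ((⅟H) x) := by
  simp [KinvOp]

theorem ofReal_sqrt_zpow_two_mul {q : ℝ} (hq : 0 ≤ q) (n : ℤ) :
    (√q : ℂ) ^ (2 * n) = (q : ℂ) ^ n := by
  rw [zpow_mul]
  norm_cast
  rw [Real.sq_sqrt hq]

theorem FOp_single {q : ℝ} (hq : 0 < q) (ε : ℝ) (H v : K →L[ℂ] K) [Invertible H] (n : ℤ) (x : K) :
    FOp q ε H v (Finsupp.single n x) =
      (((q : ℂ) - (q : ℂ)⁻¹)⁻¹ * ((q : ℂ) ^ n * (√q : ℂ)⁻¹) * ε) •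
          Finsupp.single (n - 1) (H (v x)) +
        (((q : ℂ) - (q : ℂ)⁻¹)⁻¹ * (((q : ℂ) ^ n)⁻¹ * √q) * ε) •
          Finsupp.single (n - 1) ((⅟H) x) := by
  have hs : (√q : ℂ) ≠ 0 := Complex.ofReal_ne_zero.2 (Real.sqrt_ne_zero'.2 hq)
  have hzpow : (√q : ℂ) ^ (2 * n - 1) = (q : ℂ) ^ n * (√q : ℂ)⁻¹ := by
    rw [zpow_sub_one₀ hs, ofReal_sqrt_zpow_two_mul hq.le]
  have hzpow_neg : (√q : ℂ) ^ (1 - 2 * n) = ((q : ℂ) ^ n)⁻¹ * √q := by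
    rw [← neg_sub, zpow_neg, hzpow, mul_inv, inv_inv]
  simp [FOp, hzpow, hzpow_neg]

theorem EOp_single [CompleteSpace K] {q : ℝ} (hq : 0 < q) (ε : ℝ) (H v : K →L[ℂ] K) [Invertible H]
    (n : ℤ) (x : K) :
    EOp q ε H v (Finsupp.single n x) =
      -((((q : ℂ) - (q : ℂ)⁻¹)⁻¹ * ((q : ℂ) ^ n * √q) * ε) •
          Finsupp.single (n + 1) (H (star v x))) -
        (((q : ℂ) - (q : ℂ)⁻¹)⁻¹ * (((q : ℂ) ^ n)⁻¹ * (√q : ℂ)⁻¹) * ε) •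
          Finsupp.single (n + 1) ((⅟H) x) := by
  have hs : (√q : ℂ) ≠ 0 := Complex.ofReal_ne_zero.2 (Real.sqrt_ne_zero'.2 hq)
  have hzpow : (√q : ℂ) ^ (2 * n + 1) = (q : ℂ) ^ n * √q := by
    rw [zpow_add_one₀ hs, ofReal_sqrt_zpow_two_mul hq.le]
  have hzpow_neg : (√q : ℂ) ^ (-(2 * n + 1)) = ((q : ℂ) ^ n)⁻¹ * (√q : ℂ)⁻¹ := by
    rw [zpow_neg, hzpow, mul_inv]
  simp [EOp, hzpow, hzpow_neg, -neg_add_rev, -zpow_neg]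

/-- The shift `z` as a unit, with inverse `z†`. -/
def zUnit : (Module.End ℂ (ℤ →₀ K))ˣ where
  val := zOp
  inv := zdOp
  val_inv := Finsupp.lhom_ext fun n x => by
    rw [Module.End.mul_apply, zdOp_single, zOp_single, sub_add_cancel, Module.End.one_apply]
  inv_val := Finsupp.lhom_ext fun n x => by
    rw [Module.End.mul_apply, zOp_single, zdOp_single, add_sub_cancel_right, Module.End.one_apply]

theorem val_zUnit : (zUnit : (Module.End ℂ (ℤ →₀ K))ˣ).val = zOp :=
  rfl

theorem val_inv_zUnit : (zUnit⁻¹ : (Module.End ℂ (ℤ →₀ K))ˣ).val = zdOp :=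
  rfl

theorem isFormalAdjoint_zOp_zdOp :
    IsFormalAdjoint (zOp : Module.End ℂ (ℤ →₀ K)) zdOp :=
  .of_single fun m n x y => by
    simp only [zOp_single, zdOp_single, finsuppInner_single_single, sub_eq_iff_eq_add]

section Weight

variable {q ε : ℝ} {H : K →L[ℂ] K}

theorem isFormalAdjoint_KOp (hH : (H : K →ₗ[ℂ] K).IsSymmetric) :
    IsFormalAdjoint (KOp q ε H) (KOp q ε H) :=
  .of_single fun m n x y => by
    simp only [KOp_single, finsuppInner_smul_left, finsuppInner_smul_right,
      finsuppInner_single_single, map_mul, map_zpow₀, Complex.conj_ofReal]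
    split_ifs with h
    · rw [h, ← ContinuousLinearMap.coe_coe, hH x y, ContinuousLinearMap.coe_coe]
    · rw [mul_zero, mul_zero]

variable (H)

theorem qCommute_KOp_zOp (hq : q ≠ 0) : QCommute (q : ℂ) (KOp q ε H) zOp :=
  Finsupp.lhom_ext fun n x => by
    simp only [Module.End.mul_apply, LinearMap.smul_apply, zOp_single, KOp_single, map_smul,
      zpow_add_one₀ (Complex.ofReal_ne_zero.2 hq), smul_smul]
    ring_nf

variable [Invertible H]

/-- The operator `K̂` as a unit, with inverse `K̂⁻¹`. -/
def KUnit (hq : q ≠ 0) (hε : ε ^ 2 = 1) : (Module.End ℂ (ℤ →₀ K))ˣ where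
  val := KOp q ε H
  inv := KinvOp q ε H
  val_inv := Finsupp.lhom_ext fun n x => by
    rw [Module.End.mul_apply, KinvOp_single, map_smul, KOp_single, smul_smul,
      ← mul_apply_eq_comp, mul_invOf_self, one_apply_eq_self,
      mul_mul_mul_comm, inv_mul_cancel₀ (zpow_ne_zero n (Complex.ofReal_ne_zero.2 hq)), one_mul,
      ← sq, ← Complex.ofReal_pow, hε, Complex.ofReal_one, one_smul, Module.End.one_apply]
  inv_val := Finsupp.lhom_ext fun n x => by
    rw [Module.End.mul_apply, KOp_single, map_smul, KinvOp_single, smul_smul,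
      ← mul_apply_eq_comp, invOf_mul_self, one_apply_eq_self,
      mul_mul_mul_comm, mul_inv_cancel₀ (zpow_ne_zero n (Complex.ofReal_ne_zero.2 hq)), one_mul,
      ← sq, ← Complex.ofReal_pow, hε, Complex.ofReal_one, one_smul, Module.End.one_apply]

theorem val_KUnit (hq : q ≠ 0) (hε : ε ^ 2 = 1) :
    (KUnit H hq hε).val = KOp q ε H :=
  rfl

theorem val_inv_KUnit (hq : q ≠ 0) (hε : ε ^ 2 = 1) :
    (KUnit H hq hε)⁻¹.val = KinvOp q ε H :=
  rfl

end Weight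

section Unitary

variable [CompleteSpace K]

theorem isFormalAdjoint_pointwise {ι : Type*} (T : K →L[ℂ] K) :
    IsFormalAdjoint (pointwise T : Module.End ℂ (ι →₀ K)) (pointwise (star T)) := by
  classical
  refine .of_single fun i j x y => ?_
  rw [pointwise_single, pointwise_single, finsuppInner_single_single, finsuppInner_single_single,
    ContinuousLinearMap.star_eq_adjoint, ContinuousLinearMap.adjoint_inner_right]

/-- The pointwise action of a unitary operator as a unit. -/
def vUnit {ι : Type*} (v : unitary (K →L[ℂ] K)) : (Module.End ℂ (ι →₀ K))ˣ :=
  Units.map pointwise (Unitary.toUnits v)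

theorem val_vUnit {ι : Type*} (v : unitary (K →L[ℂ] K)) :
    (vUnit v : (Module.End ℂ (ι →₀ K))ˣ).val = pointwise ↑v :=
  rfl

theorem val_inv_vUnit {ι : Type*} (v : unitary (K →L[ℂ] K)) :
    ((vUnit v)⁻¹ : (Module.End ℂ (ι →₀ K))ˣ).val = pointwise (star ↑v) :=
  rfl

variable {q ε : ℝ} {H : K →L[ℂ] K} [Invertible H]

theorem commute_vUnit_zUnit (v : unitary (K →L[ℂ] K)) : Commute (vUnit v) zUnit :=
  Units.ext <| Finsupp.lhom_ext fun n x => by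
    simp only [Units.val_mul, val_vUnit, val_zUnit, Module.End.mul_apply, zOp_single,
      pointwise_single]

theorem commute_KUnit_vUnit (hq : q ≠ 0) (hε : ε ^ 2 = 1) {v : unitary (K →L[ℂ] K)}
    (hHv : Commute H v) : Commute (KUnit H hq hε) (vUnit v) :=
  Units.ext <| Finsupp.lhom_ext fun n x => by
    rw [Units.val_mul, Units.val_mul, val_KUnit, val_vUnit, Module.End.mul_apply,
      Module.End.mul_apply, pointwise_single, KOp_single, KOp_single, map_smul, pointwise_single,
      ← mul_apply_eq_comp, hHv.eq, mul_apply_eq_comp]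

theorem EOp_eq_raising (hq : 0 < q) (hε : ε ^ 2 = 1) (v : unitary (K →L[ℂ] K)) :
    EOp q ε H v = raising (q : ℂ) √q zUnit (KUnit H hq.ne' hε) (vUnit v) := by
  refine Finsupp.lhom_ext fun n x => ?_
  rw [EOp_single hq]
  simp only [raising, toral, val_zUnit, val_KUnit, val_inv_KUnit, val_inv_vUnit,
    LinearMap.smul_apply, LinearMap.add_apply, Module.End.mul_apply, pointwise_single,
    KOp_single, KinvOp_single, zOp_single, map_add, map_smul]
  module

theorem FOp_eq_lowering (hq : 0 < q) (hε : ε ^ 2 = 1) (v : unitary (K →L[ℂ] K)) :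
    FOp q ε H v = lowering (q : ℂ) √q zUnit (KUnit H hq.ne' hε) (vUnit v) := by
  refine Finsupp.lhom_ext fun n x => ?_
  rw [FOp_single hq, lowering_eq]
  simp only [toral, val_inv_zUnit, val_KUnit, val_inv_KUnit, val_vUnit, LinearMap.smul_apply,
    LinearMap.add_apply, Module.End.mul_apply, pointwise_single, KOp_single, KinvOp_single,
    zdOp_single, map_add, map_smul, inv_inv]
  module

end Unitary

end Operators

theorem ofReal_sub_inv_ne_zero {q : ℝ} (hq0 : 0 < q) (hq1 : q ≠ 1) :
    (q : ℂ) - (q : ℂ)⁻¹ ≠ 0 := by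
  have hq_inv : q ≠ q⁻¹ := by
    rw [Ne, self_eq_inv₀]
    rintro (h | h | h)
    · linarith
    · exact hq0.ne' h
    · exact hq1 h
  exact_mod_cast sub_ne_zero.2 hq_inv

end Stmt16

open Stmt16 in
theorem stmt_16_general {K : Type*} [NormedAddCommGroup K] [InnerProductSpace ℂ K]
    [CompleteSpace K] {q : ℝ} (hq0 : 0 < q) (hq1 : q ≠ 1) {ε : ℝ} (hε : ε = 1 ∨ ε = -1)
    {H v : K →L[ℂ] K} [Invertible H]
    (hH : IsSelfAdjoint H) (hv : v ∈ unitary (K →L[ℂ] K)) (hHv : H * v = v * H) :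
    IsFormalAdjoint (zOp : Module.End ℂ (ℤ →₀ K)) zdOp ∧
    IsFormalAdjoint (EOp q ε H v) (-FOp q ε H v) ∧
    IsFormalAdjoint (KOp q ε H) (KOp q ε H) ∧
    CrossProductRelations (q : ℂ) √q zOp zdOp (EOp q ε H v) (FOp q ε H v)
      (KOp q ε H) (KinvOp q ε H) := by
  lift v to unitary (K →L[ℂ] K) using hv
  have hε_sq : ε ^ 2 = 1 := sq_eq_one_iff.2 hε
  have hs : √q ^ 2 = q := Real.sq_sqrt hq0.le
  have hkz := qCommute_KOp_zOp (ε := ε) H hq0.ne'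
  have huz := commute_vUnit_zUnit v
  have hku := commute_KUnit_vUnit hq0.ne' hε_sq hHv
  have hK := isFormalAdjoint_KOp (q := q) (ε := ε) hH.isSymmetric
  rw [EOp_eq_raising hq0 hε_sq, FOp_eq_lowering hq0 hε_sq]
  exact ⟨isFormalAdjoint_zOp_zdOp,
    isFormalAdjoint_raising hs hq0.ne' hkz huz hku isFormalAdjoint_zOp_zdOp hK
      (isFormalAdjoint_pointwise _),
    hK,
    crossProductRelations_raising_lowering (mod_cast hs) (mod_cast hq0.ne')
      (ofReal_sub_inv_ne_zero hq0 hq1) hkz huz hku⟩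

open Stmt16 in
/-- With `0 < q < 1`, `λ = q - q⁻¹`, `ε ∈ {1,-1}`, `H` a bounded invertible
self-adjoint operator and `v` a unitary operator on a Hilbert space `K` with `Hv = vH`,
the operators `z, z†, E, F, K̂, K̂⁻¹` defined above on the space of finitely supported
functions `ℤ →₀ K` form a ∗-representation of the cross product ∗-algebra
`U_q(su_{1,1}) ⋉ O(U_q)`. -/
theorem stmt_16 {K : Type*} [NormedAddCommGroup K] [InnerProductSpace ℂ K]
    [CompleteSpace K]
    (q : ℝ) (hq0 : 0 < q) (hq1 : q < 1)
    (ε : ℝ) (hε : ε = 1 ∨ ε = -1)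
    (H v : K →L[ℂ] K) [Invertible H]
    (hH : IsSelfAdjoint H) (hv : v ∈ unitary (K →L[ℂ] K)) (hHv : H * v = v * H) :
    (∀ ξ η : ℤ →₀ K,
      finsuppInner ((zOp : Module.End ℂ (ℤ →₀ K)) ξ) η = finsuppInner ξ (zdOp η)) ∧
    (∀ ξ η : ℤ →₀ K,
      finsuppInner (EOp q ε H v ξ) η = -finsuppInner ξ (FOp q ε H v η)) ∧
    (∀ ξ η : ℤ →₀ K,
      finsuppInner (KOp q ε H ξ) η = finsuppInner ξ (KOp q ε H η)) ∧
    (zdOp * zOp : Module.End ℂ (ℤ →₀ K)) - (q : ℂ) ^ 2 • (zOp * zdOp)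
      = (1 - (q : ℂ) ^ 2) • 1 ∧
    KOp q ε H * KinvOp q ε H = 1 ∧ KinvOp q ε H * KOp q ε H = 1 ∧
    KOp q ε H * EOp q ε H v = (q : ℂ) • (EOp q ε H v * KOp q ε H) ∧
    KOp q ε H * FOp q ε H v = (q : ℂ)⁻¹ • (FOp q ε H v * KOp q ε H) ∧
    EOp q ε H v * FOp q ε H v - FOp q ε H v * EOp q ε H v
      = ((q : ℂ) - (q : ℂ)⁻¹)⁻¹ •
        (KOp q ε H * KOp q ε H - KinvOp q ε H * KinvOp q ε H) ∧
    zOp * KOp q ε H = (q : ℂ)⁻¹ • (KOp q ε H * zOp) ∧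
    zOp * EOp q ε H v
      = (q : ℂ)⁻¹ • (EOp q ε H v * zOp)
        - (Real.sqrt q : ℂ) • (KinvOp q ε H * (zOp * zOp)) ∧
    zOp * FOp q ε H v
      = (q : ℂ)⁻¹ • (FOp q ε H v * zOp) + (Real.sqrt q : ℂ)⁻¹ • KinvOp q ε H ∧
    zdOp * KOp q ε H = (q : ℂ) • (KOp q ε H * zdOp) ∧
    zdOp * EOp q ε H v
      = (q : ℂ) • (EOp q ε H v * zdOp) + (Real.sqrt q : ℂ) • KinvOp q ε H ∧
    zdOp * FOp q ε H v
      = (q : ℂ) • (FOp q ε H v * zdOp)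
        - (Real.sqrt q : ℂ)⁻¹ • (KinvOp q ε H * (zdOp * zdOp)) := by
  obtain ⟨hz, hE, hK, hrel⟩ := stmt_16_general hq0 hq1.ne hε hH hv hHv
  exact ⟨hz, fun ξ η => (hE ξ η).trans (finsuppInner_neg_right _ _), hK, hrel.zd_mul_z,
    hrel.K_mul_Kinv, hrel.Kinv_mul_K, hrel.K_mul_E, hrel.K_mul_F, hrel.E_mul_F, hrel.z_mul_K,
    hrel.z_mul_E, hrel.z_mul_F, hrel.zd_mul_K, hrel.zd_mul_E, hrel.zd_mul_F⟩

end
end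

section
/- The map W which sends the element ζ ∈ H₀ placed in the (m,k,l)-th summand of H to the function (u,v,r) ↦ qᵐ·uᵏ·vˡ·ζ̃(qᵐr) on 𝕋²×ℝ⁺ (where ζ̃ denotes the extension of ζ by zero from (q,1] to ℝ⁺) is well defined and extends to a unitary operator W: H → L²(𝕋²×ℝ⁺, (Haar)⊗(r·dμ(r))). -/
open MeasureTheory

noncomputable section

/-- The measure `μ` on `ℝ⁺` determined by `μ(qᵏM) = qᵏμ₀(M)` for `k ∈ ℤ` and Borel
`M ⊆ (q,1]`; equivalently `μ = Σ_{k∈ℤ} qᵏ·((r ↦ qᵏr)_*μ₀)`. -/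
def muExt (q : ℝ) (μ₀ : Measure ℝ) : Measure ℝ :=
  Measure.sum fun k : ℤ => ENNReal.ofReal (q ^ k) • (μ₀.map fun r => q ^ k * r)

/-- `H₀ = L²((q,1], r·dμ₀(r))`, realized as `L²(ℝ, r·dμ₀)` for a measure `μ₀`
supported on `(q,1]`. -/
abbrev HZero (μ₀ : Measure ℝ) := Lp ℂ 2 (μ₀.withDensity fun r => ENNReal.ofReal r)

/-- `H = ⊕_{(m,k,l)∈ℤ³} H₀`, the Hilbert-space direct sum. -/
abbrev bigH (μ₀ : Measure ℝ) := lp (fun _ : ℤ × ℤ × ℤ => HZero μ₀) 2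

/-- The measure `(Haar) ⊗ (r·dμ(r))` on `𝕋² × ℝ⁺`, with `𝕋²` realized as
`AddCircle 1 × AddCircle 1` carrying the normalized Haar measure. -/
def nuMeas (q : ℝ) (μ₀ : Measure ℝ) :
    Measure ((AddCircle (1 : ℝ) × AddCircle (1 : ℝ)) × ℝ) :=
  (volume : Measure (AddCircle (1 : ℝ) × AddCircle (1 : ℝ))).prod
    ((muExt q μ₀).withDensity fun r => ENNReal.ofReal r)

/-- `L²(𝕋² × ℝ⁺, (Haar) ⊗ (r·dμ(r)))`. -/
abbrev targetL2 (q : ℝ) (μ₀ : Measure ℝ) := Lp ℂ 2 (nuMeas q μ₀)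

/-!
The shells `{r | qᵐ r ∈ (q, 1]}`, `m ∈ ℤ`, partition `ℝ⁺`, and `r ↦ qᵐ r` carries the restriction
of `q²ᵐ r dμ(r)` to the `m`-th shell onto `r dμ₀(r)`. Hence `ζ ↦ qᵐ ζ̃(qᵐ ·)` identifies `H₀` with
the functions in `L²(r dμ)` living on the `m`-th shell, and `L²(r dμ)` is the Hilbert sum of these
copies of `H₀`. Tensoring with the Fourier basis `uᵏ vˡ` of `L²(𝕋²)` keeps the family orthogonal.
It stays total: the adjoint of `g ↦ f ⊗ g` is the partial inner product with `f`, and a function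
on a product whose partial inner products with a countable basis all vanish has almost every slice
zero.
-/

section HilbertSpace

variable {𝕜 E ι : Type*} [RCLike 𝕜] [NormedAddCommGroup E] [InnerProductSpace 𝕜 E]

theorem eq_zero_of_forall_inner_hilbertBasis_eq_zero (b : HilbertBasis ι 𝕜 E) {x : E}
    (hx : ∀ i, inner 𝕜 (b i) x = 0) : x = 0 := by
  refine b.repr.map_eq_zero_iff.1 (lp.ext (funext fun i => ?_))
  rw [b.repr_apply_apply, hx i, lp.coeFn_zero, Pi.zero_apply]

variable [CompleteSpace E] {G : ι → Type*} [∀ i, NormedAddCommGroup (G i)]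
  [∀ i, InnerProductSpace 𝕜 (G i)] {V : ∀ i, G i →ₗᵢ[𝕜] E}

theorem isHilbertSum_of_forall_inner_eq_zero [∀ i, CompleteSpace (G i)]
    (hV : OrthogonalFamily 𝕜 G V)
    (htotal : ∀ x : E, (∀ i g, inner 𝕜 (V i g) x = 0) → x = 0) : IsHilbertSum 𝕜 G V := by
  refine IsHilbertSum.mk hV (top_le_iff.2 ?_)
  rw [Submodule.topologicalClosure_eq_top_iff, Submodule.eq_bot_iff]
  exact fun x hx => htotal x fun i g =>
    (Submodule.mem_orthogonal _ _).1 hx _ (Submodule.mem_iSup_of_mem i ⟨g, rfl⟩)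

theorem eq_zero_of_forall_inner_isHilbertSum_eq_zero (hV : IsHilbertSum 𝕜 G V) {x : E}
    (hx : ∀ i g, inner 𝕜 (V i g) x = 0) : x = 0 := by
  have hsum := hV.hasSum_linearIsometryEquiv_symm (hV.linearIsometryEquiv x)
  rw [LinearIsometryEquiv.symm_apply_apply] at hsum
  have hinner := hsum.mapL (innerSL 𝕜 x)
  have hzero : ∀ i, innerSL 𝕜 x (V i (hV.linearIsometryEquiv x i)) = 0 := fun i => by
    rw [innerSL_apply_apply, inner_eq_zero_symm, hx]
  simp only [hzero] at hinner
  exact inner_self_eq_zero.1 (hinner.unique hasSum_zero)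

end HilbertSpace

section L2

variable {𝕜 α : Type*} [RCLike 𝕜] [MeasurableSpace α] {μ : Measure α}

theorem inner_toLp_toLp {f g : α → 𝕜} (hf : MemLp f 2 μ) (hg : MemLp g 2 μ) :
    inner 𝕜 (hf.toLp f) (hg.toLp g) = ∫ x, inner 𝕜 (f x) (g x) ∂μ := by
  rw [L2.inner_def]
  refine integral_congr_ae ?_
  filter_upwards [hf.coeFn_toLp, hg.coeFn_toLp] with x hfx hgx
  rw [hfx, hgx]

theorem norm_toLp_sq {f : α → 𝕜} (hf : MemLp f 2 μ) :
    ‖hf.toLp f‖ ^ 2 = ∫ x, ‖f x‖ ^ 2 ∂μ := by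
  have h : ((‖hf.toLp f‖ ^ 2 : ℝ) : 𝕜) = ((∫ x, ‖f x‖ ^ 2 ∂μ : ℝ) : 𝕜) := by
    rw [← integral_ofReal, RCLike.ofReal_pow, ← inner_self_eq_norm_sq_to_K, inner_toLp_toLp]
    simp only [inner_self_eq_norm_sq_to_K, RCLike.ofReal_pow]
  exact RCLike.ofReal_injective h

theorem norm_integral_inner_sq_le {f g : α → 𝕜} (hf : MemLp f 2 μ) (hg : MemLp g 2 μ) :
    ‖∫ x, inner 𝕜 (f x) (g x) ∂μ‖ ^ 2 ≤ (∫ x, ‖f x‖ ^ 2 ∂μ) * ∫ x, ‖g x‖ ^ 2 ∂μ := by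
  rw [← inner_toLp_toLp hf hg, ← norm_toLp_sq hf, ← norm_toLp_sq hg, ← mul_pow]
  gcongr
  exact norm_inner_le_norm _ _

end L2

section Tensor

variable {𝕜 α β : Type*} [RCLike 𝕜] [MeasurableSpace α] [MeasurableSpace β]
  {μ : Measure α} {ν : Measure β}

theorem memLp_two_mul_prod {f : α → 𝕜} {g : β → 𝕜} (hf : MemLp f 2 μ) (hg : MemLp g 2 ν) :
    MemLp (fun p : α × β => f p.1 * g p.2) 2 (μ.prod ν) := by
  have hmeas : AEStronglyMeasurable (fun p : α × β => f p.1 * g p.2) (μ.prod ν) :=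
    hf.1.comp_fst.mul hg.1.comp_snd
  rw [memLp_two_iff_integrable_sq_norm hmeas]
  simp only [norm_mul, mul_pow]
  exact ((memLp_two_iff_integrable_sq_norm hf.1).1 hf).mul_prod
    ((memLp_two_iff_integrable_sq_norm hg.1).1 hg)

/-- The elementary tensor `f ⊗ g`, realized as the function `(x, y) ↦ f x * g y`. -/
def tensor (f : Lp 𝕜 2 μ) (g : Lp 𝕜 2 ν) : Lp 𝕜 2 (μ.prod ν) :=
  (memLp_two_mul_prod (Lp.memLp f) (Lp.memLp g)).toLp _

theorem coeFn_tensor (f : Lp 𝕜 2 μ) (g : Lp 𝕜 2 ν) :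
    tensor f g =ᵐ[μ.prod ν] fun p => f p.1 * g p.2 :=
  MemLp.coeFn_toLp _

theorem tensor_add_right (f : Lp 𝕜 2 μ) (g g' : Lp 𝕜 2 ν) :
    tensor f (g + g') = tensor f g + tensor f g' := by
  rw [tensor, tensor, tensor, ← MemLp.toLp_add]
  refine MemLp.toLp_congr _ _ ?_
  filter_upwards [Measure.quasiMeasurePreserving_snd.ae (Lp.coeFn_add g g')] with p hp
  simp only [hp, Pi.add_apply, mul_add]

theorem tensor_smul_right (c : 𝕜) (f : Lp 𝕜 2 μ) (g : Lp 𝕜 2 ν) :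
    tensor f (c • g) = c • tensor f g := by
  rw [tensor, tensor, ← MemLp.toLp_const_smul]
  refine MemLp.toLp_congr _ _ ?_
  filter_upwards [Measure.quasiMeasurePreserving_snd.ae (Lp.coeFn_smul c g)] with p hp
  simp only [hp, Pi.smul_apply, mul_smul_comm]

variable [SFinite μ] [SFinite ν]

theorem inner_tensor_tensor (f f' : Lp 𝕜 2 μ) (g g' : Lp 𝕜 2 ν) :
    inner 𝕜 (tensor f g) (tensor f' g') = inner 𝕜 f f' * inner 𝕜 g g' := by
  rw [tensor, tensor, inner_toLp_toLp, L2.inner_def, L2.inner_def, ← integral_prod_mul]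
  refine integral_congr_ae (.of_forall fun p => ?_)
  simp only [RCLike.inner_apply, map_mul]
  ring

theorem norm_tensor (f : Lp 𝕜 2 μ) (g : Lp 𝕜 2 ν) : ‖tensor f g‖ = ‖f‖ * ‖g‖ := by
  have h : ((‖tensor f g‖ ^ 2 : ℝ) : 𝕜) = (((‖f‖ * ‖g‖) ^ 2 : ℝ) : 𝕜) := by
    push_cast
    rw [mul_pow, ← inner_self_eq_norm_sq_to_K, inner_tensor_tensor, inner_self_eq_norm_sq_to_K,
      inner_self_eq_norm_sq_to_K]
  exact (pow_left_inj₀ (norm_nonneg _) (by positivity) two_ne_zero).1 (RCLike.ofReal_injective h)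

/-- Tensoring with a fixed unit vector `f ∈ L²(μ)`, as an isometric embedding
`L²(ν) → L²(μ × ν)`. -/
def tensorIsometry (f : Lp 𝕜 2 μ) (hf : ‖f‖ = 1) : Lp 𝕜 2 ν →ₗᵢ[𝕜] Lp 𝕜 2 (μ.prod ν) where
  toFun := tensor f
  map_add' := tensor_add_right f
  map_smul' c := tensor_smul_right c f
  norm_map' g := by
    change ‖tensor f g‖ = ‖g‖
    rw [norm_tensor, hf, one_mul]

theorem ae_memLp_two_slice {φ : α × β → 𝕜} (hφ : MemLp φ 2 (μ.prod ν)) :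
    ∀ᵐ y ∂ν, MemLp (fun x => φ (x, y)) 2 μ := by
  have hint := (memLp_two_iff_integrable_sq_norm hφ.1).1 hφ
  filter_upwards [hint.prod_left_ae, hφ.1.prodMk_right] with y hy hmeas
  exact (memLp_two_iff_integrable_sq_norm hmeas).2 hy

theorem memLp_two_integral_inner_slice (f : Lp 𝕜 2 μ) (φ : Lp 𝕜 2 (μ.prod ν)) :
    MemLp (fun y => ∫ x, inner 𝕜 (f x) (φ (x, y)) ∂μ) 2 ν := by
  have hmeas : AEStronglyMeasurable (fun y => ∫ x, inner 𝕜 (f x) (φ (x, y)) ∂μ) ν :=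
    ((Lp.aestronglyMeasurable f).comp_fst.inner (𝕜 := 𝕜)
      (Lp.aestronglyMeasurable φ)).prod_swap.integral_prod_right'
  have hint := (memLp_two_iff_integrable_sq_norm (Lp.aestronglyMeasurable φ)).1 (Lp.memLp φ)
  rw [memLp_two_iff_integrable_sq_norm hmeas]
  refine (hint.integral_prod_right.const_mul (∫ x, ‖f x‖ ^ 2 ∂μ)).mono' (hmeas.norm.pow 2) ?_
  filter_upwards [ae_memLp_two_slice (Lp.memLp φ)] with y hy
  rw [Real.norm_of_nonneg (by positivity)]
  exact norm_integral_inner_sq_le (Lp.memLp f) hy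

/-- The partial inner product `y ↦ ⟪f, φ(·, y)⟫` of `φ ∈ L²(μ × ν)` with `f ∈ L²(μ)`; for fixed
`f` it is the adjoint of `g ↦ f ⊗ g`. -/
def partialInner (f : Lp 𝕜 2 μ) (φ : Lp 𝕜 2 (μ.prod ν)) : Lp 𝕜 2 ν :=
  (memLp_two_integral_inner_slice f φ).toLp _

theorem inner_tensor_left (f : Lp 𝕜 2 μ) (g : Lp 𝕜 2 ν) (φ : Lp 𝕜 2 (μ.prod ν)) :
    inner 𝕜 (tensor f g) φ = inner 𝕜 g (partialInner f φ) := by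
  have hcongr : (fun p => inner 𝕜 (tensor f g p) (φ p)) =ᵐ[μ.prod ν]
      fun p => inner 𝕜 (f p.1) (φ p) * star (g p.2) := by
    filter_upwards [coeFn_tensor f g] with p hp
    simp only [hp, RCLike.inner_apply, map_mul, RCLike.star_def]
    ring
  have hpartial : partialInner f φ =ᵐ[ν] fun y => ∫ x, inner 𝕜 (f x) (φ (x, y)) ∂μ :=
    MemLp.coeFn_toLp _
  rw [L2.inner_def, L2.inner_def, integral_congr_ae hcongr,
    integral_prod_symm _ ((L2.integrable_inner (tensor f g) φ).congr hcongr)]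
  refine integral_congr_ae ?_
  filter_upwards [hpartial] with y hy
  rw [integral_mul_const, hy, RCLike.inner_apply, RCLike.star_def]

theorem eq_zero_of_ae_slice_eq_zero {φ : Lp 𝕜 2 (μ.prod ν)}
    (h : ∀ᵐ y ∂ν, (fun x => φ (x, y)) =ᵐ[μ] 0) : φ = 0 := by
  have hmeas := (Lp.aestronglyMeasurable φ).enorm
  rw [Lp.eq_zero_iff_ae_eq_zero]
  suffices hint : ∫⁻ p, ‖φ p‖ₑ ∂μ.prod ν = 0 by
    filter_upwards [(lintegral_eq_zero_iff' hmeas).1 hint] with p hp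
    exact enorm_eq_zero.1 hp
  rw [lintegral_prod_symm _ hmeas]
  refine lintegral_eq_zero_of_ae_eq_zero ?_
  filter_upwards [h] with y hy
  refine lintegral_eq_zero_of_ae_eq_zero ?_
  filter_upwards [hy] with x hx
  rw [hx]
  exact enorm_zero

variable {ι κ : Type*}

theorem orthonormal_tensor {e : ι → Lp 𝕜 2 μ} {e' : κ → Lp 𝕜 2 ν} (he : Orthonormal 𝕜 e)
    (he' : Orthonormal 𝕜 e') : Orthonormal 𝕜 fun p : ι × κ => tensor (e p.1) (e' p.2) := by
  classical
  rw [orthonormal_iff_ite] at he he' ⊢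
  rintro ⟨i, j⟩ ⟨i', j'⟩
  rw [inner_tensor_tensor, he, he', ite_zero_mul_ite_zero, one_mul]
  simp only [Prod.mk.injEq]

variable [Countable ι]

theorem eq_zero_of_forall_partialInner_eq_zero (b : HilbertBasis ι 𝕜 (Lp 𝕜 2 μ))
    {φ : Lp 𝕜 2 (μ.prod ν)} (h : ∀ i, partialInner (b i) φ = 0) : φ = 0 := by
  -- Countability of the basis gives one null set of `y` outside of which `φ(·, y)` is orthogonal
  -- to all basis vectors at once.
  have hcoeff : ∀ᵐ y ∂ν, ∀ i, ∫ x, inner 𝕜 (b i x) (φ (x, y)) ∂μ = 0 := by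
    refine ae_all_iff.2 fun i => ?_
    have hzero := (Lp.eq_zero_iff_ae_eq_zero).1 (h i)
    exact (MemLp.coeFn_toLp (memLp_two_integral_inner_slice (b i) φ)).symm.trans hzero
  refine eq_zero_of_ae_slice_eq_zero ?_
  filter_upwards [hcoeff, ae_memLp_two_slice (Lp.memLp φ)] with y hy hslice
  refine (hslice.toLp_eq_toLp_iff MemLp.zero).1 ?_
  rw [MemLp.toLp_zero]
  refine eq_zero_of_forall_inner_hilbertBasis_eq_zero b fun i => ?_
  rw [← hy i, ← inner_toLp_toLp (Lp.memLp (b i)) hslice, Lp.toLp_coeFn]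

theorem exists_hilbertBasis_tensor (b : HilbertBasis ι 𝕜 (Lp 𝕜 2 μ))
    (c : HilbertBasis κ 𝕜 (Lp 𝕜 2 ν)) :
    ∃ d : HilbertBasis (ι × κ) 𝕜 (Lp 𝕜 2 (μ.prod ν)), ∀ i j, d (i, j) = tensor (b i) (c j) := by
  have hperp : (Submodule.span 𝕜 (Set.range fun p : ι × κ => tensor (b p.1) (c p.2)))ᗮ = ⊥ := by
    refine (Submodule.eq_bot_iff _).2 fun φ hφ => ?_
    refine eq_zero_of_forall_partialInner_eq_zero b fun i => ?_
    refine eq_zero_of_forall_inner_hilbertBasis_eq_zero c fun j => ?_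
    rw [← inner_tensor_left]
    exact (Submodule.mem_orthogonal _ _).1 hφ _ (Submodule.subset_span ⟨(i, j), rfl⟩)
  refine ⟨.mkOfOrthogonalEqBot (orthonormal_tensor b.orthonormal c.orthonormal) hperp,
    fun i j => ?_⟩
  rw [HilbertBasis.coe_mkOfOrthogonalEqBot]

theorem isHilbertSum_tensor (b : HilbertBasis ι 𝕜 (Lp 𝕜 2 μ)) {G : κ → Type*}
    [∀ j, NormedAddCommGroup (G j)] [∀ j, InnerProductSpace 𝕜 (G j)] [∀ j, CompleteSpace (G j)]
    {V : ∀ j, G j →ₗᵢ[𝕜] Lp 𝕜 2 ν} (hV : IsHilbertSum 𝕜 G V) :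
    IsHilbertSum 𝕜 (fun p : κ × ι => G p.1)
      fun p => (tensorIsometry (b p.2) (b.orthonormal.norm_eq_one p.2)).comp (V p.1) := by
  refine isHilbertSum_of_forall_inner_eq_zero ?_ fun φ hφ => ?_
  · rintro ⟨j, i⟩ ⟨j', i'⟩ hne g g'
    change inner 𝕜 (tensor (b i) (V j g)) (tensor (b i') (V j' g')) = 0
    rw [inner_tensor_tensor]
    rcases eq_or_ne i i' with rfl | hi
    · rw [hV.OrthogonalFamily (fun hj : j = j' => hne (by rw [hj])), mul_zero]
    · rw [b.orthonormal.2 hi, zero_mul]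
  · refine eq_zero_of_forall_partialInner_eq_zero b fun i => ?_
    refine eq_zero_of_forall_inner_isHilbertSum_eq_zero hV fun j g => ?_
    rw [← inner_tensor_left]
    exact hφ (j, i) g

end Tensor

section WeightedComposition

variable {𝕜 X Y : Type*} [RCLike 𝕜] [MeasurableSpace X] [MeasurableSpace Y]
  {μ : Measure X} {ν : Measure Y} {w : Y → 𝕜} {T : Y → X}

theorem weighted_comp_ae_eq (hw : Measurable w)
    (hT : MeasurePreserving T (ν.withDensity fun y => ‖w y‖ₑ ^ 2) μ) {f g : X → 𝕜}
    (hfg : f =ᵐ[μ] g) : (fun y => w y * f (T y)) =ᵐ[ν] fun y => w y * g (T y) := by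
  have h := hT.quasiMeasurePreserving.ae_eq_comp hfg
  rw [Filter.EventuallyEq, ae_withDensity_iff (hw.enorm.pow_const 2)] at h
  filter_upwards [h] with y hy
  rcases eq_or_ne (w y) 0 with hwy | hwy
  · rw [hwy, zero_mul, zero_mul]
  · exact congrArg (w y * ·) (hy (pow_ne_zero 2 (enorm_ne_zero.2 hwy)))

theorem eLpNorm_two_weighted_comp (hw : Measurable w)
    (hT : MeasurePreserving T (ν.withDensity fun y => ‖w y‖ₑ ^ 2) μ) {f : X → 𝕜}
    (hf : AEStronglyMeasurable f μ) :
    eLpNorm (fun y => w y * f (T y)) 2 ν = eLpNorm f 2 μ := by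
  rw [← eLpNorm_comp_measurePreserving hf hT]
  simp only [eLpNorm_eq_lintegral_rpow_enorm_toReal two_ne_zero ENNReal.ofNat_ne_top,
    ENNReal.toReal_ofNat, ENNReal.rpow_ofNat, Function.comp_apply]
  rw [lintegral_withDensity_eq_lintegral_mul_non_measurable _ (hw.enorm.pow_const 2)
    (.of_forall fun y => ENNReal.pow_lt_top enorm_lt_top)]
  simp only [Pi.mul_apply, enorm_mul, mul_pow]

theorem memLp_two_weighted_comp (hw : Measurable w)
    (hT : MeasurePreserving T (ν.withDensity fun y => ‖w y‖ₑ ^ 2) μ) {f : X → 𝕜}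
    (hf : MemLp f 2 μ) : MemLp (fun y => w y * f (T y)) 2 ν := by
  refine ⟨?_, (eLpNorm_two_weighted_comp hw hT hf.1).trans_lt hf.2⟩
  exact ⟨fun y => w y * hf.1.mk f (T y),
    hw.stronglyMeasurable.mul (hf.1.stronglyMeasurable_mk.comp_measurable hT.measurable),
    weighted_comp_ae_eq hw hT hf.1.ae_eq_mk⟩

/-- The weighted composition operator `f ↦ w · (f ∘ T)` as an isometric embedding
`L²(μ) → L²(ν)`, for `T` pushing `|w|² dν` forward to `μ`. -/
def weightedComp (hw : Measurable w)
    (hT : MeasurePreserving T (ν.withDensity fun y => ‖w y‖ₑ ^ 2) μ) :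
    Lp 𝕜 2 μ →ₗᵢ[𝕜] Lp 𝕜 2 ν where
  toFun f := (memLp_two_weighted_comp hw hT (Lp.memLp f)).toLp _
  map_add' f g := by
    rw [← MemLp.toLp_add]
    refine MemLp.toLp_congr _ _ ((weighted_comp_ae_eq hw hT (Lp.coeFn_add f g)).trans ?_)
    exact .of_forall fun y => mul_add _ _ _
  map_smul' c f := by
    rw [RingHom.id_apply, ← MemLp.toLp_const_smul]
    refine MemLp.toLp_congr _ _ ((weighted_comp_ae_eq hw hT (Lp.coeFn_smul c f)).trans ?_)
    exact .of_forall fun y => mul_smul_comm c (w y) (f (T y))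
  norm_map' f := by
    change ‖(memLp_two_weighted_comp hw hT (Lp.memLp f)).toLp _‖ = ‖f‖
    rw [Lp.norm_toLp, eLpNorm_two_weighted_comp hw hT (Lp.aestronglyMeasurable f), Lp.norm_def]

theorem coeFn_weightedComp (hw : Measurable w)
    (hT : MeasurePreserving T (ν.withDensity fun y => ‖w y‖ₑ ^ 2) μ) (f : Lp 𝕜 2 μ) :
    weightedComp hw hT f =ᵐ[ν] fun y => w y * f (T y) :=
  (memLp_two_weighted_comp hw hT (Lp.memLp f)).coeFn_toLp

theorem inner_weightedComp_eq_zero_of_disjoint_support {μ' : Measure X} {w' : Y → 𝕜}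
    {T' : Y → X} (hw : Measurable w)
    (hT : MeasurePreserving T (ν.withDensity fun y => ‖w y‖ₑ ^ 2) μ) (hw' : Measurable w')
    (hT' : MeasurePreserving T' (ν.withDensity fun y => ‖w' y‖ₑ ^ 2) μ')
    (hdisj : Disjoint w.support w'.support) (f : Lp 𝕜 2 μ) (g : Lp 𝕜 2 μ') :
    inner 𝕜 (weightedComp hw hT f) (weightedComp hw' hT' g) = 0 := by
  rw [L2.inner_def]
  refine integral_eq_zero_of_ae ?_
  filter_upwards [coeFn_weightedComp hw hT f, coeFn_weightedComp hw' hT' g] with y hf hg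
  rw [hf, hg]
  by_cases hy : w y = 0
  · rw [hy, zero_mul, inner_zero_left, Pi.zero_apply]
  · rw [Function.notMem_support.1 (Set.disjoint_left.1 hdisj hy), zero_mul, inner_zero_right,
      Pi.zero_apply]

theorem exists_weightedComp_ae_eq_indicator (hw : Measurable w)
    (hT : MeasurePreserving T (ν.withDensity fun y => ‖w y‖ₑ ^ 2) μ) (hemb : MeasurableEmbedding T)
    (φ : Lp 𝕜 2 ν) : ∃ f : Lp 𝕜 2 μ, weightedComp hw hT f =ᵐ[ν] w.support.indicator φ := by
  set f : X → 𝕜 := Function.extend T (fun y => (w y)⁻¹ * φ y) 0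
  have hfT : ∀ y, f (T y) = (w y)⁻¹ * φ y := hemb.injective.extend_apply _ _
  have hweighted : (fun y => w y * f (T y)) = w.support.indicator φ := by
    ext y
    by_cases hy : w y = 0
    · rw [hy, zero_mul, Set.indicator_of_notMem (Function.notMem_support.2 hy)]
    · rw [hfT, mul_inv_cancel_left₀ hy, Set.indicator_of_mem hy]
  have hmeas : AEStronglyMeasurable f μ := by
    rw [← hT.map_eq, hemb.aestronglyMeasurable_map_iff]
    change AEStronglyMeasurable (fun y => f (T y)) _
    simp only [hfT]
    exact hw.inv.aestronglyMeasurable.mul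
      ((Lp.aestronglyMeasurable φ).mono_ac (withDensity_absolutelyContinuous _ _))
  have hmem : MemLp f 2 μ := by
    refine ⟨hmeas, ?_⟩
    rw [← eLpNorm_two_weighted_comp hw hT hmeas, hweighted]
    exact (eLpNorm_indicator_le _).trans_lt (Lp.eLpNorm_lt_top φ)
  refine ⟨hmem.toLp f, (coeFn_weightedComp hw hT _).trans ?_⟩
  rw [← hweighted]
  exact weighted_comp_ae_eq hw hT hmem.coeFn_toLp

theorem ae_eq_zero_on_support_of_forall_inner_weightedComp_eq_zero (hw : Measurable w)
    (hT : MeasurePreserving T (ν.withDensity fun y => ‖w y‖ₑ ^ 2) μ) (hemb : MeasurableEmbedding T)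
    {φ : Lp 𝕜 2 ν} (hφ : ∀ f, inner 𝕜 (weightedComp hw hT f) φ = 0) :
    ∀ᵐ y ∂ν, w y ≠ 0 → φ y = 0 := by
  -- The cut-off of `φ` to the support of `w` lies in the range, so it is orthogonal to `φ` and
  -- hence to itself.
  obtain ⟨f, hf⟩ := exists_weightedComp_ae_eq_indicator hw hT hemb φ
  have hself : inner 𝕜 (weightedComp hw hT f) (weightedComp hw hT f) = 0 := by
    rw [← hφ f, L2.inner_def, L2.inner_def]
    refine integral_congr_ae ?_
    filter_upwards [hf] with y hy
    rw [hy]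
    by_cases hwy : y ∈ w.support
    · rw [Set.indicator_of_mem hwy]
    · rw [Set.indicator_of_notMem hwy, inner_zero_left, inner_zero_left]
  have hzero := (Lp.eq_zero_iff_ae_eq_zero).1 (inner_self_eq_zero.1 hself)
  filter_upwards [hf, hzero] with y hy hzero hwy
  rw [← Set.indicator_of_mem (Function.mem_support.2 hwy) φ, ← hy, hzero, Pi.zero_apply]

theorem isHilbertSum_weightedComp {ι : Type*} [Countable ι] {w : ι → Y → 𝕜} {T : ι → Y → X}
    (hw : ∀ i, Measurable (w i))
    (hT : ∀ i, MeasurePreserving (T i) (ν.withDensity fun y => ‖w i y‖ₑ ^ 2) μ)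
    (hemb : ∀ i, MeasurableEmbedding (T i))
    (hdisj : Pairwise (Function.onFun Disjoint fun i => (w i).support))
    (hcover : ∀ᵐ y ∂ν, ∃ i, w i y ≠ 0) :
    IsHilbertSum 𝕜 (fun _ : ι => Lp 𝕜 2 μ) fun i => weightedComp (hw i) (hT i) := by
  refine isHilbertSum_of_forall_inner_eq_zero (fun i j hij f g => ?_) fun φ hφ => ?_
  · exact inner_weightedComp_eq_zero_of_disjoint_support _ _ _ _ (hdisj hij) f g
  · have hzero : ∀ᵐ y ∂ν, ∀ i, w i y ≠ 0 → φ y = 0 := ae_all_iff.2 fun i =>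
      ae_eq_zero_on_support_of_forall_inner_weightedComp_eq_zero (hw i) (hT i) (hemb i) (hφ i)
    rw [Lp.eq_zero_iff_ae_eq_zero]
    filter_upwards [hcover, hzero] with y ⟨i, hi⟩ hy
    exact hy i hi

end WeightedComposition

section Dilation

variable {q : ℝ}

theorem exists_zpow_mul_mem_Ioc (hq0 : 0 < q) (hq1 : q < 1) {r : ℝ} (hr : 0 < r) :
    ∃ m : ℤ, q ^ m * r ∈ Set.Ioc q 1 := by
  obtain ⟨n, hlt, hle⟩ := exists_mem_Ioc_zpow hr ((one_lt_inv₀ hq0).2 hq1)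
  rw [inv_zpow', zpow_neg, inv_lt_iff_one_lt_mul₀ (by positivity)] at hlt
  rw [inv_zpow', zpow_neg, le_inv_comm₀ hr (by positivity)] at hle
  refine ⟨n + 1, ?_, ?_⟩
  · rw [zpow_add_one₀ hq0.ne', mul_right_comm, lt_mul_iff_one_lt_left hq0, mul_comm]
    exact hlt
  · rwa [← le_div_iff₀ hr, one_div]

theorem eq_zero_of_zpow_mul_mem_Ioc (hq0 : 0 < q) (hq1 : q < 1) {r : ℝ} {k : ℤ}
    (hr : r ∈ Set.Ioc q 1) (hkr : q ^ k * r ∈ Set.Ioc q 1) : k = 0 := by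
  have hlt : q ^ (1 : ℤ) < q ^ k := by
    rw [zpow_one]
    exact hkr.1.trans_le (mul_le_of_le_one_right (by positivity) hr.2)
  have hgt : q ^ k < q ^ (-1 : ℤ) := by
    rw [zpow_neg_one, ← one_div, lt_div_iff₀ hq0]
    exact (mul_lt_mul_of_pos_left hr.1 (by positivity)).trans_le hkr.2
  rw [zpow_lt_zpow_iff_right_of_lt_one₀ hq0 hq1] at hlt hgt
  lia

/-- The weight `qᵐ` on the shell of those `r` with `qᵐ r ∈ (q, 1]`, and `0` elsewhere; the
isometry attached to the index `m` is `ζ ↦ shellWeight q m · ζ(qᵐ ·)`. -/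
def shellWeight (q : ℝ) (m : ℤ) (r : ℝ) : ℂ :=
  (Set.Ioc q 1).indicator (fun _ => (q : ℂ) ^ m) (q ^ m * r)

theorem measurable_shellWeight (q : ℝ) (m : ℤ) : Measurable (shellWeight q m) :=
  (measurable_const.indicator measurableSet_Ioc).comp (measurable_const_mul _)

theorem shellWeight_ne_zero_iff (hq : q ≠ 0) {m : ℤ} {r : ℝ} :
    shellWeight q m r ≠ 0 ↔ q ^ m * r ∈ Set.Ioc q 1 :=
  Set.indicator_apply_ne_zero.trans
    (and_iff_left (zpow_ne_zero m (Complex.ofReal_ne_zero.2 hq)))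

theorem pairwise_disjoint_support_shellWeight (hq0 : 0 < q) (hq1 : q < 1) :
    Pairwise (Function.onFun Disjoint fun m : ℤ => (shellWeight q m).support) := by
  refine fun m n hmn => Set.disjoint_left.2 fun r hm hn => hmn ?_
  rw [Function.mem_support, shellWeight_ne_zero_iff hq0.ne'] at hm hn
  have hshift : q ^ (n - m) * (q ^ m * r) ∈ Set.Ioc q 1 := by
    rwa [← mul_assoc, ← zpow_add₀ hq0.ne', sub_add_cancel]
  exact (sub_eq_zero.1 (eq_zero_of_zpow_mul_mem_Ioc hq0 hq1 hm hshift)).symm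

theorem shellWeight_zpow_neg_mul (hq : q ≠ 0) {m : ℤ} {r : ℝ} (hr : r ∈ Set.Ioc q 1) :
    shellWeight q m (q ^ (-m) * r) = (q : ℂ) ^ m := by
  rw [shellWeight, zpow_neg, mul_inv_cancel_left₀ (zpow_ne_zero m hq), Set.indicator_of_mem hr]

theorem shellWeight_zpow_mul_eq_zero (hq0 : 0 < q) (hq1 : q < 1) {m k : ℤ} {r : ℝ}
    (hr : r ∈ Set.Ioc q 1) (hk : k ≠ -m) : shellWeight q m (q ^ k * r) = 0 := by
  by_contra hne
  rw [← ne_eq, shellWeight_ne_zero_iff hq0.ne', ← mul_assoc, ← zpow_add₀ hq0.ne'] at hne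
  exact hk (eq_neg_of_add_eq_zero_right (eq_zero_of_zpow_mul_mem_Ioc hq0 hq1 hr hne))

variable {μ₀ : Measure ℝ}

theorem lintegral_muExt {f : ℝ → ENNReal} (hf : Measurable f) :
    ∫⁻ r, f r ∂muExt q μ₀ =
      ∑' k : ℤ, ENNReal.ofReal (q ^ k) * ∫⁻ r, f (q ^ k * r) ∂μ₀ := by
  simp only [muExt, lintegral_sum_measure, lintegral_smul_measure, smul_eq_mul,
    lintegral_map hf (measurable_const_mul _)]

theorem lintegral_muExt_mul_enorm_shellWeight_sq (hq0 : 0 < q) (hq1 : q < 1)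
    (hsupp : μ₀ (Set.Ioc q 1)ᶜ = 0) (m : ℤ) {f : ℝ → ENNReal} (hf : Measurable f) :
    ∫⁻ r, ‖shellWeight q m r‖ₑ ^ 2 * f r ∂muExt q μ₀ =
      ENNReal.ofReal (q ^ m) * ∫⁻ r, f (q ^ (-m) * r) ∂μ₀ := by
  have hmem : ∀ᵐ r ∂μ₀, r ∈ Set.Ioc q 1 := hsupp
  have hmeas : Measurable fun r => ‖shellWeight q m r‖ₑ ^ 2 * f r :=
    ((measurable_shellWeight q m).enorm.pow_const 2).mul hf
  rw [lintegral_muExt hmeas, tsum_eq_single (-m)]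
  · have hval : ∀ᵐ r ∂μ₀, ‖shellWeight q m (q ^ (-m) * r)‖ₑ ^ 2 * f (q ^ (-m) * r) =
        ENNReal.ofReal (q ^ m) ^ 2 * f (q ^ (-m) * r) := by
      filter_upwards [hmem] with r hr
      rw [shellWeight_zpow_neg_mul hq0.ne' hr, ← ofReal_norm, norm_zpow,
        Complex.norm_of_nonneg hq0.le]
    rw [lintegral_congr_ae hval,
      lintegral_const_mul' _ _ (ENNReal.pow_ne_top ENNReal.ofReal_ne_top), ← mul_assoc,
      ← ENNReal.ofReal_pow (by positivity), ← ENNReal.ofReal_mul (by positivity), sq,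
      ← mul_assoc, ← zpow_add₀ hq0.ne', neg_add_cancel, zpow_zero, one_mul]
  · intro k hk
    refine mul_eq_zero_of_right _ (lintegral_eq_zero_of_ae_eq_zero ?_)
    filter_upwards [hmem] with r hr
    rw [shellWeight_zpow_mul_eq_zero hq0 hq1 hr hk, enorm_zero, zero_pow two_ne_zero, zero_mul,
      Pi.zero_apply]

theorem measurePreserving_zpow_mul (hq0 : 0 < q) (hq1 : q < 1)
    (hsupp : μ₀ (Set.Ioc q 1)ᶜ = 0) (m : ℤ) :
    MeasurePreserving (fun r => q ^ m * r)
      (((muExt q μ₀).withDensity fun r => ENNReal.ofReal r).withDensity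
        fun r => ‖shellWeight q m r‖ₑ ^ 2)
      (μ₀.withDensity fun r => ENNReal.ofReal r) := by
  have hdil : Measurable fun r : ℝ => q ^ m * r := measurable_const_mul _
  have hw : Measurable fun r => ‖shellWeight q m r‖ₑ ^ 2 :=
    (measurable_shellWeight q m).enorm.pow_const 2
  refine ⟨hdil, Measure.ext_of_lintegral _ fun f hf => ?_⟩
  have hfdil : Measurable fun r => f (q ^ m * r) := hf.comp hdil
  have hscale : ∀ r, ENNReal.ofReal (q ^ (-m) * r) =
      ENNReal.ofReal (q ^ (-m)) * ENNReal.ofReal r := fun r =>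
    ENNReal.ofReal_mul (by positivity)
  have hcancel : ∀ r, q ^ m * (q ^ (-m) * r) = r := fun r => by
    rw [zpow_neg, mul_inv_cancel_left₀ (zpow_ne_zero m hq0.ne')]
  rw [lintegral_map hf hdil, lintegral_withDensity_eq_lintegral_mul _ hw hfdil,
    lintegral_withDensity_eq_lintegral_mul _ ENNReal.measurable_ofReal (hw.mul hfdil),
    lintegral_withDensity_eq_lintegral_mul _ ENNReal.measurable_ofReal hf]
  calc ∫⁻ r, ENNReal.ofReal r * (‖shellWeight q m r‖ₑ ^ 2 * f (q ^ m * r)) ∂muExt q μ₀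
    _ = ∫⁻ r, ‖shellWeight q m r‖ₑ ^ 2 * (ENNReal.ofReal r * f (q ^ m * r)) ∂muExt q μ₀ := by
      simp only [mul_left_comm]
    _ = ENNReal.ofReal (q ^ m) *
          ∫⁻ r, ENNReal.ofReal (q ^ (-m) * r) * f (q ^ m * (q ^ (-m) * r)) ∂μ₀ :=
      lintegral_muExt_mul_enorm_shellWeight_sq hq0 hq1 hsupp m
        (ENNReal.measurable_ofReal.mul hfdil)
    _ = ENNReal.ofReal (q ^ m) * ENNReal.ofReal (q ^ (-m)) *
          ∫⁻ r, ENNReal.ofReal r * f r ∂μ₀ := by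
      simp only [hscale, hcancel, mul_assoc]
      rw [lintegral_const_mul' _ _ ENNReal.ofReal_ne_top]
    _ = ∫⁻ r, ENNReal.ofReal r * f r ∂μ₀ := by
      rw [← ENNReal.ofReal_mul (by positivity), ← zpow_add₀ hq0.ne', add_neg_cancel, zpow_zero,
        ENNReal.ofReal_one, one_mul]

/-- The isometric embedding `ζ ↦ qᵐ ζ̃(qᵐ ·)` of `L²((q, 1], r dμ₀)` into `L²(ℝ⁺, r dμ)`. -/
def dilation (hq0 : 0 < q) (hq1 : q < 1) (hsupp : μ₀ (Set.Ioc q 1)ᶜ = 0) (m : ℤ) :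
    HZero μ₀ →ₗᵢ[ℂ] Lp ℂ 2 ((muExt q μ₀).withDensity fun r => ENNReal.ofReal r) :=
  weightedComp (measurable_shellWeight q m) (measurePreserving_zpow_mul hq0 hq1 hsupp m)

theorem coeFn_dilation (hq0 : 0 < q) (hq1 : q < 1) (hsupp : μ₀ (Set.Ioc q 1)ᶜ = 0) (m : ℤ)
    (ζ : HZero μ₀) :
    dilation hq0 hq1 hsupp m ζ =ᵐ[(muExt q μ₀).withDensity fun r => ENNReal.ofReal r]
      fun r => (q : ℂ) ^ m * (Set.Ioc q 1).indicator (fun r => ζ r) (q ^ m * r) := by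
  filter_upwards [coeFn_weightedComp (measurable_shellWeight q m)
    (measurePreserving_zpow_mul hq0 hq1 hsupp m) ζ] with r hr
  rw [dilation, hr, shellWeight, ← Set.indicator_mul_left]
  exact Set.indicator_mul_right _ (fun _ => (q : ℂ) ^ m) _

theorem isHilbertSum_dilation (hq0 : 0 < q) (hq1 : q < 1) (hsupp : μ₀ (Set.Ioc q 1)ᶜ = 0) :
    IsHilbertSum ℂ (fun _ : ℤ => HZero μ₀) (dilation hq0 hq1 hsupp) := by
  refine isHilbertSum_weightedComp _ _
    (fun m => measurableEmbedding_mulLeft₀ (zpow_ne_zero m hq0.ne'))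
    (pairwise_disjoint_support_shellWeight hq0 hq1) ?_
  refine (ae_withDensity_iff ENNReal.measurable_ofReal).2 (.of_forall fun r hr => ?_)
  obtain ⟨m, hm⟩ := exists_zpow_mul_mem_Ioc hq0 hq1
    (ENNReal.ofReal_pos.1 (pos_iff_ne_zero.2 hr))
  exact ⟨m, (shellWeight_ne_zero_iff hq0.ne').2 hm⟩

end Dilation

section Torus

theorem exists_hilbertBasis_ae_eq_toCircle_zpow :
    ∃ b : HilbertBasis ℤ ℂ (Lp ℂ 2 (volume : Measure (AddCircle (1 : ℝ)))),
      ∀ n, b n =ᵐ[volume] fun x => (AddCircle.toCircle x : ℂ) ^ n := by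
  have hvol : (volume : Measure (AddCircle (1 : ℝ))) = AddCircle.haarAddCircle := by
    rw [AddCircle.volume_eq_smul_haarAddCircle, ENNReal.ofReal_one, one_smul]
  rw [hvol]
  refine ⟨fourierBasis, fun n => ?_⟩
  rw [coe_fourierBasis]
  filter_upwards [coeFn_fourierLp 2 n] with x hx
  rw [hx, fourier_apply, AddCircle.toCircle_zsmul, Circle.coe_zpow]

theorem exists_hilbertBasis_ae_eq_toCircle_zpow_mul_toCircle_zpow :
    ∃ b : HilbertBasis (ℤ × ℤ) ℂ
        (Lp ℂ 2 (volume : Measure (AddCircle (1 : ℝ) × AddCircle (1 : ℝ)))),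
      ∀ k l, b (k, l) =ᵐ[volume] fun x =>
        (AddCircle.toCircle x.1 : ℂ) ^ k * (AddCircle.toCircle x.2 : ℂ) ^ l := by
  obtain ⟨b, hb⟩ := exists_hilbertBasis_ae_eq_toCircle_zpow
  obtain ⟨d, hd⟩ := exists_hilbertBasis_tensor b b
  refine ⟨d, fun k l => ?_⟩
  rw [hd]
  filter_upwards [coeFn_tensor (b k) (b l), Measure.quasiMeasurePreserving_fst.ae (hb k),
    Measure.quasiMeasurePreserving_snd.ae (hb l)] with x hx hk hl
  rw [hx, hk, hl]

end Torus

theorem stmt_18_general (q : ℝ) (hq0 : 0 < q) (hq1 : q < 1)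
    (μ₀ : Measure ℝ) [SFinite μ₀] (hsupp : μ₀ (Set.Ioc q 1)ᶜ = 0) :
    ∃ W : bigH μ₀ ≃ₗᵢ[ℂ] targetL2 q μ₀,
      ∀ (m k l : ℤ) (ζ : HZero μ₀),
        (W (lp.single 2 (m, k, l) ζ) :
            ((AddCircle (1 : ℝ) × AddCircle (1 : ℝ)) × ℝ) → ℂ)
          =ᵐ[nuMeas q μ₀] fun p =>
            (q : ℂ) ^ m * (AddCircle.toCircle p.1.1 : ℂ) ^ k
              * (AddCircle.toCircle p.1.2 : ℂ) ^ l
              * Set.indicator (Set.Ioc q 1) (fun r => (ζ : ℝ → ℂ) r) (q ^ m * p.2) := by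
  have : SFinite (muExt q μ₀) := by
    unfold muExt
    infer_instance
  obtain ⟨b, hb⟩ := exists_hilbertBasis_ae_eq_toCircle_zpow_mul_toCircle_zpow
  have hsum := isHilbertSum_tensor b (isHilbertSum_dilation hq0 hq1 hsupp)
  unfold targetL2 nuMeas
  refine ⟨hsum.linearIsometryEquiv.symm, fun m k l ζ => ?_⟩
  rw [hsum.linearIsometryEquiv_symm_apply_single]
  filter_upwards [coeFn_tensor (b (k, l)) (dilation hq0 hq1 hsupp m ζ),
    Measure.quasiMeasurePreserving_fst.ae (hb k l),
    Measure.quasiMeasurePreserving_snd.ae (coeFn_dilation hq0 hq1 hsupp m ζ)] with p hp hkl hm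
  refine hp.trans ?_
  rw [hkl, hm]
  ring

/-- Let `0 < q < 1`, let `μ₀` be a finite positive Borel measure on the
interval `(q,1] ⊆ ℝ` and `μ` its extension to `ℝ⁺` with `μ(qᵏM) = qᵏμ₀(M)`.  The map `W`
sending `ζ ∈ H₀ = L²((q,1], r·dμ₀)` placed in the `(m,k,l)`-th summand of
`H = ⊕_{ℤ³} H₀` to the function `(u,v,r) ↦ qᵐ·uᵏ·vˡ·ζ̃(qᵐr)` on `𝕋² × ℝ⁺` (where `ζ̃`
is the extension of `ζ` by zero and `u, v` are the circle coordinates) is well defined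
and extends to a unitary operator `W : H → L²(𝕋² × ℝ⁺, (Haar) ⊗ (r·dμ(r)))`. -/
theorem stmt_18 (q : ℝ) (hq0 : 0 < q) (hq1 : q < 1)
    (μ₀ : Measure ℝ) [IsFiniteMeasure μ₀] (hsupp : μ₀ (Set.Ioc q 1)ᶜ = 0) :
    ∃ W : bigH μ₀ ≃ₗᵢ[ℂ] targetL2 q μ₀,
      ∀ (m k l : ℤ) (ζ : HZero μ₀),
        (W (lp.single 2 (m, k, l) ζ) :
            ((AddCircle (1 : ℝ) × AddCircle (1 : ℝ)) × ℝ) → ℂ)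
          =ᵐ[nuMeas q μ₀] fun p =>
            (q : ℂ) ^ m * (AddCircle.toCircle p.1.1 : ℂ) ^ k
              * (AddCircle.toCircle p.1.2 : ℂ) ^ l
              * Set.indicator (Set.Ioc q 1) (fun r => (ζ : ℝ → ℂ) r) (q ^ m * p.2) :=
  stmt_18_general q hq0 hq1 μ₀ hsupp

end
end
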